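/- arXiv:1208.2232 — 2 statements merged into one kernel-verified Lean document; each statement's English description precedes it below -/
import Mathlib

section
/- There is a short exact sequence of graded left A(1)-modules 0 → Σ³ A(1)/(Sq¹,Sq³) → A(1)/(Sq¹) → A(1)/(Sq¹,Sq³) → 0, where the first map sends the generator to the class of Sq³ = Sq¹Sq² (equivalently Sq²Sq¹ in the quotient) and the second is the canonical projection. -/
noncomputable section

/-- Relations defining A(1): (Sq¹)² = 0, Sq²Sq² = Sq¹Sq²Sq¹, Sq²Sq¹Sq²Sq¹ = Sq¹Sq²Sq¹Sq². -/
inductive A1Rel : FreeAlgebra (ZMod 2) (Fin 2) → FreeAlgebra (ZMod 2) (Fin 2) → Prop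
  | sq1_sq1 : A1Rel (FreeAlgebra.ι (ZMod 2) (0 : Fin 2) * FreeAlgebra.ι (ZMod 2) 0) 0
  | adem : A1Rel (FreeAlgebra.ι (ZMod 2) (1 : Fin 2) * FreeAlgebra.ι (ZMod 2) 1)
      (FreeAlgebra.ι (ZMod 2) (0 : Fin 2) * FreeAlgebra.ι (ZMod 2) 1 * FreeAlgebra.ι (ZMod 2) 0)
  | top : A1Rel
      (FreeAlgebra.ι (ZMod 2) (1 : Fin 2) * FreeAlgebra.ι (ZMod 2) 0 *
        FreeAlgebra.ι (ZMod 2) 1 * FreeAlgebra.ι (ZMod 2) 0)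
      (FreeAlgebra.ι (ZMod 2) (0 : Fin 2) * FreeAlgebra.ι (ZMod 2) 1 *
        FreeAlgebra.ι (ZMod 2) 0 * FreeAlgebra.ι (ZMod 2) 1)

/-- The algebra A(1), subalgebra of the mod-2 Steenrod algebra generated by Sq¹, Sq². -/
abbrev A1 := RingQuot A1Rel

def Sq1 : A1 := RingQuot.mkAlgHom (ZMod 2) A1Rel (FreeAlgebra.ι (ZMod 2) 0)
def Sq2 : A1 := RingQuot.mkAlgHom (ZMod 2) A1Rel (FreeAlgebra.ι (ZMod 2) 1)
def Sq3 : A1 := Sq1 * Sq2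

/-- Generators, for building monomial words. -/
def A1gen : Fin 2 → A1
  | 0 => Sq1
  | 1 => Sq2

/-- Weight of a word: Sq¹ has degree 1, Sq² has degree 2. -/
def A1wt (l : List (Fin 2)) : ℕ := (l.map fun i => (i : ℕ) + 1).sum

/-- The product of a word of generators. -/
def A1word (l : List (Fin 2)) : A1 := (l.map A1gen).prod

/-- The degree-`n` graded component of A(1): the F₂-span of monomials of weight `n`. -/
def A1deg (n : ℕ) : Submodule (ZMod 2) A1 :=
  Submodule.span (ZMod 2) {x | ∃ l, A1wt l = n ∧ x = A1word l}

/-- The degree-`n` component of a cyclic module A(1)/I. -/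
def A1qdeg (I : Submodule A1 A1) (n : ℕ) : Submodule (ZMod 2) (A1 ⧸ I) :=
  Submodule.map (I.mkQ.restrictScalars (ZMod 2)) (A1deg n)

lemma Sq1_mul_Sq1 : Sq1 * Sq1 = 0 := by
  simpa [Sq1] using RingQuot.mkAlgHom_rel (ZMod 2) A1Rel.sq1_sq1

lemma Sq2_mul_Sq2 : Sq2 * Sq2 = Sq1 * Sq2 * Sq1 := by
  simpa [Sq1, Sq2] using RingQuot.mkAlgHom_rel (ZMod 2) A1Rel.adem

lemma Sq2_Sq1_Sq2_Sq1 : Sq2 * Sq1 * Sq2 * Sq1 = Sq1 * Sq2 * Sq1 * Sq2 := by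
  simpa [Sq1, Sq2] using RingQuot.mkAlgHom_rel (ZMod 2) A1Rel.top

lemma Sq1_mem_span_Sq1_Sq3 : Sq1 ∈ Submodule.span A1 {Sq1, Sq3} :=
  Submodule.subset_span (by simp)

lemma Sq3_mem_span_Sq1_Sq3 : Sq3 ∈ Submodule.span A1 {Sq1, Sq3} :=
  Submodule.subset_span (by simp)

/-- `A(1)/(Sq¹, Sq³)` is spanned over `F₂` by the classes of `1` and `Sq²`. -/
lemma exists_sub_mem_span_Sq1_Sq3 (x : A1) :
    ∃ α β : ZMod 2, x - (α • (1 : A1) + β • Sq2) ∈ Submodule.span A1 {Sq1, Sq3} := by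
  set J := Submodule.span A1 {Sq1, Sq3}
  suffices h : ∀ y : FreeAlgebra (ZMod 2) (Fin 2), ∀ s : A1,
      (∃ α β : ZMod 2, s - (α • (1 : A1) + β • Sq2) ∈ J) →
      ∃ α β : ZMod 2,
        RingQuot.mkAlgHom (ZMod 2) A1Rel y * s - (α • (1 : A1) + β • Sq2) ∈ J by
    obtain ⟨y, rfl⟩ := RingQuot.mkAlgHom_surjective (ZMod 2) A1Rel x
    simpa using h y 1 ⟨1, 0, by simp⟩
  intro y
  induction y using FreeAlgebra.induction with
  | grade0 r =>
    rintro s ⟨α, β, h⟩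
    refine ⟨r * α, r * β, ?_⟩
    have := J.smul_of_tower_mem r h
    rw [AlgHom.commutes, ← Algebra.smul_def]
    convert this using 1
    module
  | grade1 i =>
    rintro s ⟨α, β, h⟩
    fin_cases i
    · refine ⟨0, 0, ?_⟩
      have h₁ := J.smul_mem Sq1 h
      have h₂ := J.smul_of_tower_mem α Sq1_mem_span_Sq1_Sq3
      have h₃ := J.smul_of_tower_mem β Sq3_mem_span_Sq1_Sq3
      convert J.add_mem h₁ (J.add_mem h₂ h₃) using 1
      change Sq1 * s - _ = _
      simp [mul_sub, mul_add, Sq3]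
    · refine ⟨0, α, ?_⟩
      have h₁ := J.smul_mem Sq2 h
      have h₂ := J.smul_of_tower_mem β (J.smul_mem (Sq1 * Sq2) Sq1_mem_span_Sq1_Sq3)
      convert J.add_mem h₁ h₂ using 1
      change Sq2 * s - _ = _
      simp [mul_sub, mul_add, Sq2_mul_Sq2]
      abel
  | mul a b ha hb =>
    intro s hs
    rw [map_mul, mul_assoc]
    exact ha _ (hb s hs)
  | add a b ha hb =>
    intro s hs
    obtain ⟨α, β, h⟩ := ha s hs
    obtain ⟨α', β', h'⟩ := hb s hs
    refine ⟨α + α', β + β', ?_⟩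
    rw [map_add, add_mul]
    convert J.add_mem h h' using 1
    module

/-- The matrices of `Sq¹` and `Sq²` acting on `A(1)/(Sq¹)` in the basis
`1, Sq², Sq¹Sq², Sq²Sq¹Sq²`. -/
def A1genMatrix : Fin 2 → Matrix (Fin 4) (Fin 4) (ZMod 2)
  | 0 => !![0, 0, 0, 0; 0, 0, 0, 0; 0, 1, 0, 0; 0, 0, 0, 0]
  | 1 => !![0, 0, 0, 0; 1, 0, 0, 0; 0, 0, 0, 0; 0, 0, 1, 0]

/-- The matrix representation of `A(1)` on `A(1)/(Sq¹)`. -/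
def A1rep : A1 →ₐ[ZMod 2] Matrix (Fin 4) (Fin 4) (ZMod 2) :=
  RingQuot.liftAlgHom (ZMod 2) ⟨FreeAlgebra.lift (ZMod 2) A1genMatrix, by
    rintro _ _ (_ | _ | _) <;> simp only [map_mul, map_zero, FreeAlgebra.lift_ι_apply] <;> decide⟩

lemma A1rep_Sq1 : A1rep Sq1 = A1genMatrix 0 := by
  simp [A1rep, Sq1]

lemma A1rep_Sq2 : A1rep Sq2 = A1genMatrix 1 := by
  simp [A1rep, Sq2]

lemma A1rep_apply_zero_of_mem {x : A1} (hx : x ∈ Submodule.span A1 {Sq1}) (i : Fin 4) :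
    A1rep x i 0 = 0 := by
  obtain ⟨c, rfl⟩ := Submodule.mem_span_singleton.1 hx
  rw [smul_eq_mul, map_mul, A1rep_Sq1, Matrix.mul_apply]
  refine Finset.sum_eq_zero fun j _ => ?_
  have : A1genMatrix 0 j 0 = 0 := by decide +revert
  rw [this, mul_zero]

lemma Sq3_mul_Sq3_mem : Sq3 * Sq3 ∈ Submodule.span A1 {Sq1} := by
  refine Submodule.mem_span_singleton.2 ⟨Sq2 * Sq1 * Sq2, ?_⟩
  rw [smul_eq_mul, Sq2_Sq1_Sq2_Sq1, Sq3, mul_assoc (Sq1 * Sq2)]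

/-- Right multiplication by `Sq³` carries the left ideal `(Sq¹, Sq³)` into `(Sq¹)`. -/
lemma mul_Sq3_mem {x : A1} (hx : x ∈ Submodule.span A1 {Sq1, Sq3}) :
    x * Sq3 ∈ Submodule.span A1 {Sq1} := by
  obtain ⟨c, d, rfl⟩ := Submodule.mem_span_pair.1 hx
  have : (c • Sq1 + d • Sq3) * Sq3 = d • (Sq3 * Sq3) := by
    simp only [smul_eq_mul, add_mul, mul_assoc]
    rw [show Sq1 * Sq3 = 0 by rw [Sq3, ← mul_assoc, Sq1_mul_Sq1, zero_mul], mul_zero, zero_add]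
  rw [this]
  exact Submodule.smul_mem _ _ Sq3_mul_Sq3_mem

lemma mem_of_mul_Sq3_mem {x : A1} (hx : x * Sq3 ∈ Submodule.span A1 {Sq1}) :
    x ∈ Submodule.span A1 {Sq1, Sq3} := by
  obtain ⟨α, β, h⟩ := exists_sub_mem_span_Sq1_Sq3 x
  have key : (α • (1 : A1) + β • Sq2) * Sq3 ∈ Submodule.span A1 {Sq1} := by
    convert Submodule.sub_mem _ hx (mul_Sq3_mem h) using 1
    rw [sub_mul, sub_sub_cancel]
  have hrep (i : Fin 4) := A1rep_apply_zero_of_mem key i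
  simp only [Sq3, map_mul, map_add, map_smul, map_one, A1rep_Sq1, A1rep_Sq2] at hrep
  obtain ⟨rfl, rfl⟩ : α = 0 ∧ β = 0 := by
    clear key h
    decide +revert
  simpa using h

lemma mul_Sq3_mem_A1deg {n : ℕ} {y : A1} (hy : y ∈ A1deg n) : y * Sq3 ∈ A1deg (n + 3) := by
  induction hy using Submodule.span_induction with
  | mem x hx =>
    obtain ⟨l, rfl, rfl⟩ := hx
    refine Submodule.subset_span ⟨l ++ [0, 1], ?_, ?_⟩
    · simp [A1wt]
    · simp [A1word, A1gen, Sq3]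
  | zero => simp
  | add x y _ _ hx hy => rw [add_mul]; exact add_mem hx hy
  | smul c x _ hx => rw [smul_mul_assoc]; exact Submodule.smul_mem _ c hx

/-- The short exact sequence of graded left A(1)-modules
`0 → Σ³ A(1)/(Sq¹,Sq³) → A(1)/(Sq¹) → A(1)/(Sq¹,Sq³) → 0`, where the first map sends
the generator to the class of Sq³ (raising degrees by 3) and the second is the
canonical projection. -/
theorem ses_ku_HZ :
    ∃ f : (A1 ⧸ (Submodule.span A1 {Sq1, Sq3})) →ₗ[A1] (A1 ⧸ (Submodule.span A1 {Sq1})),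
    ∃ g : (A1 ⧸ (Submodule.span A1 {Sq1})) →ₗ[A1] (A1 ⧸ (Submodule.span A1 {Sq1, Sq3})),
      f ((Submodule.span A1 {Sq1, Sq3}).mkQ 1) = (Submodule.span A1 {Sq1}).mkQ Sq3 ∧
      (∀ x : A1, g ((Submodule.span A1 {Sq1}).mkQ x) = (Submodule.span A1 {Sq1, Sq3}).mkQ x) ∧
      Function.Injective f ∧ Function.Surjective g ∧
      LinearMap.range f = LinearMap.ker g ∧
      (∀ n : ℕ, ∀ x ∈ A1qdeg (Submodule.span A1 {Sq1, Sq3}) n,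
        f x ∈ A1qdeg (Submodule.span A1 {Sq1}) (n + 3)) := by
  set I := Submodule.span A1 {Sq1}
  set J := Submodule.span A1 {Sq1, Sq3}
  have hIJ : I ≤ J := Submodule.span_mono (by simp)
  let f : (A1 ⧸ J) →ₗ[A1] (A1 ⧸ I) :=
    J.liftQ (I.mkQ ∘ₗ LinearMap.toSpanSingleton A1 A1 Sq3) fun x hx => by
      simpa using mul_Sq3_mem hx
  let g : (A1 ⧸ I) →ₗ[A1] (A1 ⧸ J) := Submodule.factor hIJ
  have hf (x : A1) : f (J.mkQ x) = I.mkQ (x * Sq3) := rfl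
  have hg (x : A1) : g (I.mkQ x) = J.mkQ x := rfl
  refine ⟨f, g, by rw [hf, one_mul], hg, ?_, Submodule.factor_surjective hIJ, ?_, ?_⟩
  · rw [injective_iff_map_eq_zero]
    intro x hx
    obtain ⟨x, rfl⟩ := J.mkQ_surjective x
    rw [hf, Submodule.mkQ_apply, Submodule.Quotient.mk_eq_zero] at hx
    rw [Submodule.mkQ_apply, Submodule.Quotient.mk_eq_zero]
    exact mem_of_mul_Sq3_mem hx
  · ext y
    obtain ⟨y, rfl⟩ := I.mkQ_surjective y
    rw [LinearMap.mem_ker, hg, Submodule.mkQ_apply J, Submodule.Quotient.mk_eq_zero]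
    constructor
    · rintro ⟨x, hx⟩
      obtain ⟨x, rfl⟩ := J.mkQ_surjective x
      rw [hf, Submodule.mkQ_apply, Submodule.mkQ_apply, Submodule.Quotient.eq] at hx
      rw [← sub_sub_cancel (x * Sq3) y]
      exact J.sub_mem (J.smul_mem x Sq3_mem_span_Sq1_Sq3) (hIJ hx)
    · intro hy
      obtain ⟨c, d, rfl⟩ := Submodule.mem_span_pair.1 hy
      refine ⟨J.mkQ d, ?_⟩
      rw [hf, Submodule.mkQ_apply, Submodule.mkQ_apply, eq_comm, Submodule.Quotient.eq,
        smul_eq_mul d, add_sub_cancel_right]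
      exact I.smul_mem c (Submodule.mem_span_singleton_self Sq1)
  · rintro n _ ⟨y, hy, rfl⟩
    exact ⟨y * Sq3, mul_Sq3_mem_A1deg hy, rfl⟩

end
end

section
/- The left ideal of A(1) generated by Sq² is isomorphic, as a graded left A(1)-module, to Σ³ A(1)/(Sq³), i.e. the annihilator of Sq² for left multiplication in A(1) is the left ideal generated by Sq³ = Sq¹Sq². -/
noncomputable section

namespace A1

theorem sq1_mul_sq1 : Sq1 * Sq1 = 0 := by
  simpa [Sq1] using RingQuot.mkAlgHom_rel (ZMod 2) A1Rel.sq1_sq1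

theorem sq2_mul_sq2 : Sq2 * Sq2 = Sq1 * Sq2 * Sq1 := by
  simpa [Sq1, Sq2] using RingQuot.mkAlgHom_rel (ZMod 2) A1Rel.adem

theorem sq2_sq1_sq2_sq1 : Sq2 * Sq1 * Sq2 * Sq1 = Sq1 * Sq2 * Sq1 * Sq2 := by
  simpa [Sq1, Sq2] using RingQuot.mkAlgHom_rel (ZMod 2) A1Rel.top

/-- Left multiplication by `Sq1` in the coordinates of `ofCoords`. -/
def coordSq1 : (Fin 8 → ZMod 2) →ₗ[ZMod 2] (Fin 8 → ZMod 2) where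
  toFun v := ![0, v 0, 0, v 2, 0, v 4, 0, v 6]
  map_add' v w := by ext i; fin_cases i <;> simp
  map_smul' c v := by ext i; fin_cases i <;> simp

/-- Left multiplication by `Sq2` in the coordinates of `ofCoords`. -/
def coordSq2 : (Fin 8 → ZMod 2) →ₗ[ZMod 2] (Fin 8 → ZMod 2) where
  toFun v := ![0, 0, v 0, 0, v 1, v 2, v 3, v 5]
  map_add' v w := by ext i; fin_cases i <;> simp
  map_smul' c v := by ext i; fin_cases i <;> simp

theorem coordSq1_apply (v : Fin 8 → ZMod 2) :
    coordSq1 v = ![0, v 0, 0, v 2, 0, v 4, 0, v 6] := rfl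

theorem coordSq2_apply (v : Fin 8 → ZMod 2) :
    coordSq2 v = ![0, 0, v 0, 0, v 1, v 2, v 3, v 5] := rfl

/-- The regular representation of A(1), in the coordinates of `ofCoords`. -/
def regularRep : A1 →ₐ[ZMod 2] Module.End (ZMod 2) (Fin 8 → ZMod 2) :=
  RingQuot.liftAlgHom (ZMod 2) ⟨FreeAlgebra.lift (ZMod 2) ![coordSq1, coordSq2], by
    rintro _ _ (_ | _ | _) <;> refine LinearMap.ext fun v => ?_ <;>
      simp [coordSq1_apply, coordSq2_apply]⟩

@[simp]
theorem regularRep_sq1 : regularRep Sq1 = coordSq1 := by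
  simp [regularRep, Sq1]

@[simp]
theorem regularRep_sq2 : regularRep Sq2 = coordSq2 := by
  simp [regularRep, Sq2]

/-- The linear combination of the monomial basis of A(1) with given coordinates. -/
def ofCoords (v : Fin 8 → ZMod 2) : A1 :=
  v 0 • (1 : A1) + v 1 • Sq1 + v 2 • Sq2 + v 3 • (Sq1 * Sq2) + v 4 • (Sq2 * Sq1) +
    v 5 • (Sq1 * Sq2 * Sq1) + v 6 • (Sq2 * Sq1 * Sq2) + v 7 • (Sq1 * Sq2 * Sq1 * Sq2)

theorem ofCoords_add (v w : Fin 8 → ZMod 2) : ofCoords (v + w) = ofCoords v + ofCoords w := by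
  simp only [ofCoords, Pi.add_apply, add_smul]
  abel

theorem ofCoords_smul (c : ZMod 2) (v : Fin 8 → ZMod 2) :
    ofCoords (c • v) = c • ofCoords v := by
  simp only [ofCoords, Pi.smul_apply, smul_eq_mul, mul_smul, smul_add]

theorem sq1_mul_ofCoords (v : Fin 8 → ZMod 2) : Sq1 * ofCoords v = ofCoords (coordSq1 v) := by
  have h (y : A1) : Sq1 * (Sq1 * y) = 0 := by rw [← mul_assoc, sq1_mul_sq1, zero_mul]
  simp [ofCoords, coordSq1_apply, mul_add, mul_assoc, h, sq1_mul_sq1]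

theorem sq2_mul_ofCoords (v : Fin 8 → ZMod 2) : Sq2 * ofCoords v = ofCoords (coordSq2 v) := by
  have h1 (y : A1) : Sq1 * (Sq1 * y) = 0 := by rw [← mul_assoc, sq1_mul_sq1, zero_mul]
  have h2 : Sq2 * Sq2 = Sq1 * (Sq2 * Sq1) := by rw [sq2_mul_sq2, mul_assoc]
  have h2' (y : A1) : Sq2 * (Sq2 * y) = Sq1 * (Sq2 * (Sq1 * y)) := by
    rw [← mul_assoc, h2]; simp only [mul_assoc]
  have h3 : Sq2 * (Sq1 * (Sq2 * Sq1)) = Sq1 * (Sq2 * (Sq1 * Sq2)) := by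
    simpa only [mul_assoc] using sq2_sq1_sq2_sq1
  have h4 : Sq2 * (Sq1 * (Sq2 * (Sq1 * Sq2))) = 0 := by
    rw [← h3, h2', h1, mul_zero, mul_zero]
  simp [ofCoords, coordSq2_apply, mul_add, mul_assoc, h1, h2, h2', h3, h4, sq1_mul_sq1]

theorem ofCoords_regularRep (x : A1) (v : Fin 8 → ZMod 2) :
    ofCoords (regularRep x v) = x * ofCoords v := by
  obtain ⟨x, rfl⟩ := RingQuot.mkAlgHom_surjective (ZMod 2) A1Rel x
  induction x using FreeAlgebra.induction generalizing v with
  | grade0 r =>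
    rw [AlgHom.commutes, AlgHom.commutes, Module.algebraMap_end_apply, ofCoords_smul,
      Algebra.smul_def]
  | grade1 i =>
    fin_cases i
    · change ofCoords (regularRep Sq1 v) = Sq1 * _
      rw [regularRep_sq1, sq1_mul_ofCoords]
    · change ofCoords (regularRep Sq2 v) = Sq2 * _
      rw [regularRep_sq2, sq2_mul_ofCoords]
  | mul x y hx hy => rw [map_mul, map_mul, Module.End.mul_apply, hx, hy, mul_assoc]
  | add x y hx hy =>
    rw [map_add, map_add, LinearMap.add_apply, ofCoords_add, hx, hy, add_mul]

theorem ofCoords_surjective : Function.Surjective ofCoords := fun x =>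
  ⟨regularRep x (Pi.single 0 1), by
    rw [ofCoords_regularRep]; simp [ofCoords]⟩

theorem mul_sq2_eq_zero_iff (x : A1) : x * Sq2 = 0 ↔ x ∈ Submodule.span A1 {Sq3} := by
  rw [Submodule.mem_span_singleton]
  constructor
  · intro hx
    obtain ⟨v, rfl⟩ := ofCoords_surjective x
    have h : regularRep (ofCoords v * Sq2) (Pi.single 0 1) =
        ![0, 0, v 0, v 1, 0, v 2, v 4, v 5] := by
      ext i
      fin_cases i <;> simp [ofCoords, coordSq1_apply, coordSq2_apply]
    rw [hx, map_zero, LinearMap.zero_apply] at h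
    have h0 : v 0 = 0 := (congrFun h 2).symm
    have h1 : v 1 = 0 := (congrFun h 3).symm
    have h2 : v 2 = 0 := (congrFun h 5).symm
    have h4 : v 4 = 0 := (congrFun h 6).symm
    have h5 : v 5 = 0 := (congrFun h 7).symm
    refine ⟨v 3 • (1 : A1) + v 6 • Sq2 + v 7 • (Sq1 * Sq2), ?_⟩
    simp [ofCoords, Sq3, add_mul, mul_assoc, h0, h1, h2, h4, h5]
  · rintro ⟨y, rfl⟩
    rw [smul_eq_mul, Sq3, mul_assoc, mul_assoc, sq2_mul_sq2, ← mul_assoc Sq1, ← mul_assoc Sq1,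
      sq1_mul_sq1, zero_mul, zero_mul, mul_zero]

end A1

/-- Right multiplication by Sq² on A(1) has kernel the left ideal generated by
Sq³ = Sq¹Sq²; consequently the left ideal generated by Sq² is isomorphic as a left
A(1)-module to Σ³ A(1)/(Sq³). -/
theorem right_mul_sq2_kernel :
    (∀ x : A1, x * Sq2 = 0 ↔ x ∈ Submodule.span A1 {Sq3}) ∧
    ∃ e : (Submodule.span A1 {Sq2}) ≃ₗ[A1] (A1 ⧸ (Submodule.span A1 {Sq3})),
      e ⟨Sq2, Submodule.subset_span (Set.mem_singleton _)⟩ =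
        (Submodule.span A1 {Sq3}).mkQ 1 := by
  have hker : Submodule.span A1 {Sq3} = LinearMap.ker (LinearMap.toSpanSingleton A1 A1 Sq2) := by
    ext x
    rw [LinearMap.mem_ker, LinearMap.toSpanSingleton_apply, smul_eq_mul, A1.mul_sq2_eq_zero_iff]
  refine ⟨A1.mul_sq2_eq_zero_iff,
    ((Submodule.quotEquivOfEq _ _ hker).trans
      ((LinearMap.toSpanSingleton A1 A1 Sq2).quotKerEquivRange.trans
        (LinearEquiv.ofEq _ _ (LinearMap.range_toSpanSingleton Sq2)))).symm, ?_⟩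
  rw [LinearEquiv.symm_apply_eq]
  ext
  simp

end
end
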